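/- Let q be a prime power with q ≡ 5 (mod 12). Then in 𝔽_{q²}^6 there exists a set {B_0, B_1, B_2} of three pairwise mutually unbiased orthonormal bases, where B_0 is the computational basis (the standard basis vectors e_1, …, e_6), together with four unit vectors v_1, v_2, v_3, v_4 that are pairwise orthogonal and each of which is mutually unbiased to every vector of B_0 ∪ B_1 ∪ B_2. -/

import Mathlib

open Finset

/-- The σ-Hermitian inner product on `F^d`, where σ is the `q`-power Frobenius. -/
def hermInner {F : Type*} [Field F] (q : ℕ) {d : ℕ} (u v : Fin d → F) : F :=
  ∑ j, (u j) ^ q * v j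

/-- Orthonormal basis: pairwise Hermitian inner products given by the Kronecker delta. -/
def IsON {F : Type*} [Field F] (q : ℕ) {d : ℕ} (b : Fin d → Fin d → F) : Prop :=
  ∀ i j, hermInner q (b i) (b j) = if i = j then 1 else 0

/-- Mutually unbiased bases: all relative norms of cross inner products equal `(d : F)⁻¹`. -/
def IsMUB {F : Type*} [Field F] (q : ℕ) {d : ℕ} (b c : Fin d → Fin d → F) : Prop :=
  ∀ i j, (hermInner q (b i) (c j)) ^ (q + 1) = (d : F)⁻¹

/-!
Since `q ≡ 5 (mod 12)`, a primitive twelfth root of unity `ζ` lies in `𝔽_{q²}` and Frobenius sends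
it to `ζ ^ 5`. Hence Frobenius negates `√3 = ζ + ζ⁻¹`, the unit `x = -2 - √3` has relative norm `1`,
and so has the cube root of unity `w = ζ ^ 4`. Vectors whose entries are signed monomials in `x` and
`w` are then unimodular, conjugation inverts their entries, and their Hermitian products become
Laurent polynomials in `x` and `w`. So orthogonality and unbiasedness of the vectors below are
formal consequences of `x ^ 2 + 4 * x + 1 = 0` and `w ^ 2 + w + 1 = 0`. They are normalised by the
factor `(1 - x)⁻¹`, whose relative norm is `1 / 6` because `(1 - x) * (1 - x⁻¹) = 2 - (x + x⁻¹)` and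
`x + x⁻¹ = -4`.
-/

section Unimodular

variable {F ι : Type*} [Field F] {q d : ℕ} {u v : Fin d → F} {c : F}

/-- A unimodular vector of `F^d`: every entry has relative norm `1`. -/
def IsUnimodular (q : ℕ) (u : Fin d → F) : Prop :=
  ∀ j, u j ^ (q + 1) = 1

/-- Mutual unbiasedness of two unimodular vectors before normalisation. Conjugation inverts the
entries of a unimodular vector, so the Hermitian product of two such vectors is `u⁻¹ ⬝ᵥ v`, its
conjugate is `v⁻¹ ⬝ᵥ u`, and the condition says that its relative norm is `d`. -/
def IsUnbiased (u v : Fin d → F) : Prop :=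
  (u⁻¹ ⬝ᵥ v) * (v⁻¹ ⬝ᵥ u) = d

/-- Pairwise Hermitian orthogonality of a family of unimodular vectors, with conjugation again
written as inversion. For `d` vectors these are the rows of a generalised Hadamard matrix. -/
def IsOrthogonalFamily (v : ι → Fin d → F) : Prop :=
  Pairwise fun a b => (v a)⁻¹ ⬝ᵥ v b = 0

theorem IsUnbiased.symm (h : IsUnbiased u v) : IsUnbiased v u :=
  (mul_comm _ _).trans h

namespace IsUnimodular

theorem inv (hu : IsUnimodular q u) : IsUnimodular q u⁻¹ := fun j => by
  rw [Pi.inv_apply, inv_pow, hu j, inv_one]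

theorem mul (hu : IsUnimodular q u) (hv : IsUnimodular q v) : IsUnimodular q (u * v) := fun j => by
  rw [Pi.mul_apply, mul_pow, hu j, hv j, one_mul]

theorem ne_zero (hu : IsUnimodular q u) (j : Fin d) : u j ≠ 0 :=
  (IsUnit.of_pow_eq_one (hu j) q.succ_ne_zero).ne_zero

theorem pow_eq_inv (hu : IsUnimodular q u) (j : Fin d) : u j ^ q = (u j)⁻¹ :=
  eq_inv_of_mul_eq_one_left (by rw [← pow_succ, hu j])

theorem inv_dotProduct_self (hu : IsUnimodular q u) : u⁻¹ ⬝ᵥ u = d := by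
  simp [dotProduct, hu.ne_zero]

theorem hermInner_smul_smul (hu : IsUnimodular q u) (hc : c ^ (q + 1) = (d : F)⁻¹) :
    hermInner q (c • u) (c • v) = (d : F)⁻¹ * (u⁻¹ ⬝ᵥ v) := by
  simp only [hermInner, dotProduct, ← hc, mul_sum, Pi.smul_apply, Pi.inv_apply, smul_eq_mul,
    mul_pow, hu.pow_eq_inv]
  exact sum_congr rfl fun j _ => by ring

end IsUnimodular

namespace IsOrthogonalFamily

theorem hermInner_smul_smul [DecidableEq ι] {v : ι → Fin d → F} (hv : IsOrthogonalFamily v)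
    (hu : ∀ a, IsUnimodular q (v a)) (hc : c ^ (q + 1) = (d : F)⁻¹) (hd : (d : F) ≠ 0) (a b : ι) :
    hermInner q (c • v a) (c • v b) = if a = b then 1 else 0 := by
  rw [(hu a).hermInner_smul_smul hc]
  split_ifs with hab
  · rw [← hab, (hu a).inv_dotProduct_self, inv_mul_cancel₀ hd]
  · rw [hv hab, mul_zero]

theorem mul_inv {v : ι → Fin d → F} (hv : IsOrthogonalFamily v) {t : Fin d → F}
    (ht : ∀ j, t j ≠ 0) : IsOrthogonalFamily fun a => t * (v a)⁻¹ := fun a b hab => by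
  rw [← hv hab.symm]
  refine sum_congr rfl fun j _ => ?_
  simp only [Pi.inv_apply, Pi.mul_apply, _root_.mul_inv, inv_inv]
  rw [mul_mul_mul_comm, inv_mul_cancel₀ (ht j), one_mul, mul_comm]

end IsOrthogonalFamily

end Unimodular

section StdBasis

variable {F : Type*} [Field F] {q d n : ℕ} {c : F}

/-- The computational basis of `F^d`. -/
def stdBasis (F : Type*) [Field F] (d : ℕ) : Fin d → Fin d → F :=
  fun i j => if i = j then 1 else 0

theorem hermInner_stdBasis_left (hq : q ≠ 0) (i : Fin d) (v : Fin d → F) :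
    hermInner q (stdBasis F d i) v = v i := by
  simp [hermInner, stdBasis, ite_pow, hq]

theorem hermInner_stdBasis_right (u : Fin d → F) (i : Fin d) :
    hermInner q u (stdBasis F d i) = u i ^ q := by
  simp [hermInner, stdBasis]

theorem isON_stdBasis (hq : q ≠ 0) : IsON q (stdBasis F d) := fun i j => by
  rw [hermInner_stdBasis_left hq, stdBasis]
  simp only [eq_comm]

theorem IsUnimodular.hermInner_stdBasis_smul_pow {u : Fin d → F} (hu : IsUnimodular q u)
    (hc : c ^ (q + 1) = (d : F)⁻¹) (hq : q ≠ 0) (i : Fin d) :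
    hermInner q (stdBasis F d i) (c • u) ^ (q + 1) = (d : F)⁻¹ := by
  rw [hermInner_stdBasis_left hq, Pi.smul_apply, smul_eq_mul, mul_pow, hu i, hc, mul_one]

/-- The computational basis followed by the rescaled bases `c • H 0, c • H 1, …`. -/
def consStdBasis (c : F) (H : Fin n → Fin d → Fin d → F) : Fin (n + 1) → Fin d → Fin d → F :=
  Fin.cons (stdBasis F d) fun i j => c • H i j

theorem isON_consStdBasis {H : Fin n → Fin d → Fin d → F} (hq : q ≠ 0)
    (hH : ∀ i, IsOrthogonalFamily (H i)) (hu : ∀ i j, IsUnimodular q (H i j))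
    (hc : c ^ (q + 1) = (d : F)⁻¹) (hd : (d : F) ≠ 0) (i : Fin (n + 1)) :
    IsON q (consStdBasis c H i) := by
  cases i using Fin.cases with
  | zero => exact isON_stdBasis hq
  | succ i => exact (hH i).hermInner_smul_smul (hu i) hc hd

end StdBasis

section Frobenius

variable {F : Type*} [Field F] {p k d n : ℕ} [ExpChar F p] {u v : Fin d → F} {c : F}
  {H : Fin n → Fin d → Fin d → F}

theorem inv_natCast_pow_expChar_pow (d : ℕ) : ((d : F)⁻¹) ^ p ^ k = (d : F)⁻¹ := by
  rw [← iterateFrobenius_def, map_inv₀, map_natCast]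

namespace IsUnimodular

theorem inv_dotProduct_pow (hu : IsUnimodular (p ^ k) u) (hv : IsUnimodular (p ^ k) v) :
    (u⁻¹ ⬝ᵥ v) ^ p ^ k = v⁻¹ ⬝ᵥ u := by
  simp only [dotProduct, ← iterateFrobenius_def, map_sum, map_mul]
  refine sum_congr rfl fun j _ => ?_
  rw [iterateFrobenius_def, iterateFrobenius_def, hu.inv.pow_eq_inv, hv.pow_eq_inv, Pi.inv_apply,
    inv_inv, mul_comm, Pi.inv_apply]

theorem hermInner_smul_smul_pow (hu : IsUnimodular (p ^ k) u) (hv : IsUnimodular (p ^ k) v)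
    (huv : IsUnbiased u v) (hc : c ^ (p ^ k + 1) = (d : F)⁻¹) :
    hermInner (p ^ k) (c • u) (c • v) ^ (p ^ k + 1) = (d : F)⁻¹ := by
  have norm_eq : (u⁻¹ ⬝ᵥ v) ^ (p ^ k + 1) = d := by
    rw [pow_succ, hu.inv_dotProduct_pow hv, huv.symm]
  rw [hu.hermInner_smul_smul hc, mul_pow, norm_eq, pow_succ, inv_natCast_pow_expChar_pow]
  simpa only [inv_inv] using mul_self_mul_inv (d : F)⁻¹

theorem hermInner_smul_stdBasis_pow (hu : IsUnimodular (p ^ k) u)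
    (hc : c ^ (p ^ k + 1) = (d : F)⁻¹) (i : Fin d) :
    hermInner (p ^ k) (c • u) (stdBasis F d i) ^ (p ^ k + 1) = (d : F)⁻¹ := by
  rw [hermInner_stdBasis_right, Pi.smul_apply, smul_eq_mul, pow_right_comm, mul_pow, hu i, hc,
    mul_one, inv_natCast_pow_expChar_pow]

theorem hermInner_smul_consStdBasis_pow (hv : IsUnimodular (p ^ k) v)
    (hH : ∀ i j, IsUnbiased v (H i j)) (hu : ∀ i j, IsUnimodular (p ^ k) (H i j))
    (hc : c ^ (p ^ k + 1) = (d : F)⁻¹) (i : Fin (n + 1)) (j : Fin d) :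
    hermInner (p ^ k) (c • v) (consStdBasis c H i j) ^ (p ^ k + 1) = (d : F)⁻¹ := by
  cases i using Fin.cases with
  | zero => exact hv.hermInner_smul_stdBasis_pow hc j
  | succ i => exact hv.hermInner_smul_smul_pow (hu i j) (hH i j) hc

end IsUnimodular

theorem isMUB_consStdBasis (hH : Pairwise fun i i' => ∀ j j', IsUnbiased (H i j) (H i' j'))
    (hu : ∀ i j, IsUnimodular (p ^ k) (H i j)) (hc : c ^ (p ^ k + 1) = (d : F)⁻¹)
    {i i' : Fin (n + 1)} (hii' : i ≠ i') :
    IsMUB (p ^ k) (consStdBasis c H i) (consStdBasis c H i') := by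
  intro j j'
  cases i using Fin.cases with
  | zero =>
    obtain ⟨i', rfl⟩ := Fin.exists_succ_eq.mpr hii'.symm
    exact (hu i' j').hermInner_stdBasis_smul_pow hc (expChar_pow_pos F p k).ne' j
  | succ i =>
    cases i' using Fin.cases with
    | zero => exact (hu i j).hermInner_smul_stdBasis_pow hc j'
    | succ i' =>
      have hne : i ≠ i' := fun h => hii' (congrArg Fin.succ h)
      exact (hu i j).hermInner_smul_smul_pow (hu i' j') (hH hne j j') hc

end Frobenius

section DimensionSix

variable {F : Type*} [Field F] {q : ℕ} {x w ε : F}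

/-- The first of the two unimodular bases, before normalisation; `x` is a root of
`X ^ 2 + 4 * X + 1` of relative norm `1`. -/
def hadamardSix (x : F) : Fin 6 → Fin 6 → F :=
  ![![1, 1, 1, 1, 1, 1],
    ![1, 1, 1, 1, x, x⁻¹],
    ![1, -x, -1, -1, x, 1],
    ![1, -1, -x, -1, x, 1],
    ![1, -1, -1, -x, x, 1],
    ![1, x, x, x, x * x, x]]

/-- The diagonal of the matrix that carries the conjugate of `hadamardSix` to the second basis. -/
def twistSix (x : F) : Fin 6 → F :=
  ![1, x, x, x, x * x, 1]

/-- The two unimodular bases, before normalisation: `hadamardSix` and its rescaled conjugate, where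
conjugation is written as inversion. -/
def basesSix (x : F) : Fin 2 → Fin 6 → Fin 6 → F :=
  ![hadamardSix x, fun j => twistSix x * (hadamardSix x j)⁻¹]

/-- A vector unbiased to both bases of `basesSix x`, before normalisation, for each sign `ε` and
each primitive cube root of unity `w`. -/
def extraSix (x ε w : F) : Fin 6 → F :=
  ![1, ε * w⁻¹, ε * w, ε, w⁻¹ * x, w]

/-- The four additional vectors, before normalisation: `extraSix` for the two signs and the two
primitive cube roots of unity. -/
def extrasSix (x w : F) : Fin 4 → Fin 6 → F :=
  ![extraSix x 1 w, extraSix x (-1) w, extraSix x 1 w⁻¹, extraSix x (-1) w⁻¹]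

theorem isUnimodular_hadamardSix (hq : Odd q) (hx : x ^ (q + 1) = 1) (j : Fin 6) :
    IsUnimodular q (hadamardSix x j) := by
  intro l
  fin_cases j <;> fin_cases l <;> simp [hadamardSix, hx, mul_pow, hq.add_one.neg_pow]

theorem isUnimodular_twistSix (hx : x ^ (q + 1) = 1) : IsUnimodular q (twistSix x) := by
  intro l
  fin_cases l <;> simp [twistSix, hx, mul_pow]

theorem isUnimodular_basesSix (hq : Odd q) (hx : x ^ (q + 1) = 1) :
    ∀ i j, IsUnimodular q (basesSix x i j) :=
  Fin.forall_fin_two.mpr ⟨isUnimodular_hadamardSix hq hx,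
    fun j => (isUnimodular_twistSix hx).mul (isUnimodular_hadamardSix hq hx j).inv⟩

theorem isUnimodular_extraSix (hx : x ^ (q + 1) = 1) (hε : ε ^ (q + 1) = 1)
    (hw : w ^ (q + 1) = 1) : IsUnimodular q (extraSix x ε w) := by
  intro l
  fin_cases l <;> simp [extraSix, hx, hε, hw, mul_pow]

theorem isUnimodular_extrasSix (hq : Odd q) (hx : x ^ (q + 1) = 1) (hw : w ^ (q + 1) = 1)
    (a : Fin 4) : IsUnimodular q (extrasSix x w a) := by
  have hε : (-1 : F) ^ (q + 1) = 1 := hq.add_one.neg_one_pow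
  have hw' : w⁻¹ ^ (q + 1) = 1 := by rw [inv_pow, hw, inv_one]
  fin_cases a
  exacts [isUnimodular_extraSix hx (one_pow _) hw, isUnimodular_extraSix hx hε hw,
    isUnimodular_extraSix hx (one_pow _) hw', isUnimodular_extraSix hx hε hw']

theorem inv_dotProduct_fin_six (u v : Fin 6 → F) :
    u⁻¹ ⬝ᵥ v = (u 0)⁻¹ * v 0 + (u 1)⁻¹ * v 1 + (u 2)⁻¹ * v 2 + (u 3)⁻¹ * v 3 + (u 4)⁻¹ * v 4
      + (u 5)⁻¹ * v 5 :=
  Fin.sum_univ_six _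

theorem isOrthogonalFamily_hadamardSix (hx : x ^ 2 + 4 * x + 1 = 0) :
    IsOrthogonalFamily (hadamardSix x) := by
  have hx' : x⁻¹ = -4 - x := by grind
  intro i j hij
  simp only [inv_dotProduct_fin_six]
  fin_cases i <;> fin_cases j <;> (try contradiction) <;>
    simp only [hadamardSix, Fin.zero_eta, Fin.mk_one, Fin.reduceFinMk, Matrix.cons_val, inv_one,
      inv_neg, inv_inv, mul_inv] <;> grind

theorem isUnbiased_hadamardSix_twist (hx : x ^ 2 + 4 * x + 1 = 0) (i j : Fin 6) :
    IsUnbiased (hadamardSix x i) (twistSix x * (hadamardSix x j)⁻¹) := by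
  have hx' : x⁻¹ = -4 - x := by grind
  simp only [IsUnbiased, inv_dotProduct_fin_six]
  fin_cases i <;> fin_cases j <;>
    simp only [hadamardSix, twistSix, Fin.zero_eta, Fin.mk_one, Fin.reduceFinMk, Pi.inv_apply,
      Pi.mul_apply, Matrix.cons_val, inv_one, inv_neg, inv_inv, mul_inv] <;> grind

theorem isUnbiased_extraSix_hadamardSix (hx : x ^ 2 + 4 * x + 1 = 0) (hw : w ^ 2 + w + 1 = 0)
    (hε : ε = 1 ∨ ε = -1) (j : Fin 6) : IsUnbiased (extraSix x ε w) (hadamardSix x j) := by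
  have hx' : x⁻¹ = -4 - x := by grind
  have hw' : w⁻¹ = -1 - w := by grind
  simp only [IsUnbiased, inv_dotProduct_fin_six]
  rcases hε with rfl | rfl <;> fin_cases j <;>
    simp only [extraSix, hadamardSix, Fin.zero_eta, Fin.mk_one, Fin.reduceFinMk, Matrix.cons_val,
      inv_one, inv_neg, inv_inv, mul_inv] <;> grind

theorem isUnbiased_extraSix_twist (hx : x ^ 2 + 4 * x + 1 = 0) (hw : w ^ 2 + w + 1 = 0)
    (hε : ε = 1 ∨ ε = -1) (j : Fin 6) :
    IsUnbiased (extraSix x ε w) (twistSix x * (hadamardSix x j)⁻¹) := by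
  have hx' : x⁻¹ = -4 - x := by grind
  have hw' : w⁻¹ = -1 - w := by grind
  simp only [IsUnbiased, inv_dotProduct_fin_six]
  rcases hε with rfl | rfl <;> fin_cases j <;>
    simp only [extraSix, hadamardSix, twistSix, Fin.zero_eta, Fin.mk_one, Fin.reduceFinMk,
      Pi.inv_apply, Pi.mul_apply, Matrix.cons_val, inv_one, inv_neg, inv_inv, mul_inv] <;> grind

theorem isOrthogonalFamily_extrasSix (hx : x ≠ 0) (hw : w ^ 2 + w + 1 = 0) :
    IsOrthogonalFamily (extrasSix x w) := by
  have hw' : w⁻¹ = -1 - w := by grind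
  intro a b hab
  simp only [inv_dotProduct_fin_six]
  fin_cases a <;> fin_cases b <;> (try contradiction) <;>
    simp only [extrasSix, extraSix, Fin.zero_eta, Fin.mk_one, Fin.reduceFinMk, Matrix.cons_val,
      inv_one, inv_neg, inv_inv, mul_inv] <;> grind

theorem isOrthogonalFamily_basesSix (hx : x ^ 2 + 4 * x + 1 = 0) :
    ∀ i, IsOrthogonalFamily (basesSix x i) := by
  have hx0 : x ≠ 0 := by grind
  have ht : ∀ j, twistSix x j ≠ 0 := fun j => by fin_cases j <;> simp [twistSix, hx0]
  exact Fin.forall_fin_two.mpr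
    ⟨isOrthogonalFamily_hadamardSix hx, (isOrthogonalFamily_hadamardSix hx).mul_inv ht⟩

theorem pairwise_isUnbiased_basesSix (hx : x ^ 2 + 4 * x + 1 = 0) :
    Pairwise fun i i' => ∀ j j', IsUnbiased (basesSix x i j) (basesSix x i' j') := by
  intro i i' hii' j j'
  fin_cases i <;> fin_cases i'
  · contradiction
  · exact isUnbiased_hadamardSix_twist hx j j'
  · exact (isUnbiased_hadamardSix_twist hx j' j).symm
  · contradiction

theorem isUnbiased_extrasSix_basesSix (hx : x ^ 2 + 4 * x + 1 = 0) (hw : w ^ 2 + w + 1 = 0)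
    (a : Fin 4) (i : Fin 2) (j : Fin 6) : IsUnbiased (extrasSix x w a) (basesSix x i j) := by
  have unbiased {ε w : F} (hε : ε = 1 ∨ ε = -1) (hw : w ^ 2 + w + 1 = 0) :
      IsUnbiased (extraSix x ε w) (basesSix x i j) := by
    fin_cases i
    exacts [isUnbiased_extraSix_hadamardSix hx hw hε j, isUnbiased_extraSix_twist hx hw hε j]
  have hw' : w⁻¹ ^ 2 + w⁻¹ + 1 = 0 := by grind
  fin_cases a
  exacts [unbiased (.inl rfl) hw, unbiased (.inr rfl) hw, unbiased (.inl rfl) hw',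
    unbiased (.inr rfl) hw']

end DimensionSix

section RootsOfUnity

variable {F : Type*} [Field F]

theorem exists_isPrimitiveRoot_of_dvd_card_sub_one [Fintype F] {n : ℕ}
    (hn : n ∣ Fintype.card F - 1) : ∃ ζ : F, IsPrimitiveRoot ζ n := by
  obtain ⟨g, hg⟩ := IsCyclic.exists_ofOrder_eq_natCard (α := Fˣ)
  obtain ⟨m, hm⟩ := hn
  rw [Nat.card_units, Nat.card_eq_fintype_card, hm] at hg
  have hpos : 0 < n * m := hm ▸ Nat.sub_pos_of_lt Fintype.one_lt_card
  have hroot : IsPrimitiveRoot g (n * m) := hg ▸ IsPrimitiveRoot.orderOf g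
  exact ⟨_, IsPrimitiveRoot.coe_units_iff.mpr (hroot.pow hpos (mul_comm n m))⟩

theorem exists_isPrimitiveRoot_twelve [Fintype F] {q : ℕ} (hmod : q % 12 = 5)
    (hF : Fintype.card F = q ^ 2) : ∃ ζ : F, IsPrimitiveRoot ζ 12 := by
  have hsq : q ^ 2 % 12 = 1 := by rw [Nat.pow_mod, hmod]
  exact exists_isPrimitiveRoot_of_dvd_card_sub_one (by lia)

theorem exists_expChar_eq_pow_of_card_eq_sq [Fintype F] {q : ℕ} (hq : IsPrimePow q)
    (hF : Fintype.card F = q ^ 2) : ∃ p k, ∃ _ : ExpChar F p, q = p ^ k := by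
  obtain ⟨p, k, hp, -, rfl⟩ := hq
  have : Fact p.Prime := ⟨hp.nat_prime⟩
  have : CharP F p := charP_of_card_eq_prime_pow (hF.trans (pow_mul p k 2).symm)
  exact ⟨p, k, .prime hp.nat_prime, rfl⟩

/-- The root `-2 - √3` of `X ^ 2 + 4 * X + 1`, where `√3` is `ζ + ζ⁻¹` for a primitive twelfth root
of unity `ζ`. -/
def sqrtThreeUnit (ζ : F) : F :=
  -2 - (ζ + ζ⁻¹)

variable {p k : ℕ} [ExpChar F p] {x ζ : F}

theorem pow_four_of_isPrimitiveRoot_twelve (hζ : IsPrimitiveRoot ζ 12) : ζ ^ 4 = ζ ^ 2 - 1 := by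
  have h6 : ζ ^ 6 = -1 :=
    (hζ.pow (by decide) (by decide : 12 = 6 * 2)).eq_neg_one_of_two_right
  have h2 : ζ ^ 2 + 1 ≠ 0 := fun h =>
    hζ.pow_ne_one_of_pos_of_lt (by decide) (by decide : 4 < 12) (by grind)
  have hmul : (ζ ^ 2 + 1) * (ζ ^ 4 - ζ ^ 2 + 1) = 0 := by linear_combination h6
  linear_combination (mul_eq_zero.mp hmul).resolve_left h2

theorem sqrtThreeUnit_sq (hζ : IsPrimitiveRoot ζ 12) :
    sqrtThreeUnit ζ ^ 2 + 4 * sqrtThreeUnit ζ + 1 = 0 := by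
  have hζ0 : ζ ≠ 0 := hζ.ne_zero (by decide)
  have h4 := pow_four_of_isPrimitiveRoot_twelve hζ
  rw [sqrtThreeUnit]
  field_simp
  linear_combination h4

theorem sqrtThreeUnit_pow (hζ : IsPrimitiveRoot ζ 12) (hmod : p ^ k % 12 = 5) :
    sqrtThreeUnit ζ ^ (p ^ k + 1) = 1 := by
  have hζ0 : ζ ≠ 0 := hζ.ne_zero (by decide)
  have h4 := pow_four_of_isPrimitiveRoot_twelve hζ
  have conj : sqrtThreeUnit ζ ^ p ^ k = -2 - (ζ ^ 5 + (ζ ^ 5)⁻¹) := by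
    simp only [sqrtThreeUnit, ← iterateFrobenius_def, map_sub, map_neg, map_add, map_inv₀,
      map_ofNat]
    rw [iterateFrobenius_def, ← pow_mod_orderOf, ← hζ.eq_orderOf, hmod]
  have h5 : ζ ^ 5 + (ζ ^ 5)⁻¹ = -(ζ + ζ⁻¹) := by
    field_simp
    linear_combination (ζ ^ 6 + ζ ^ 4 + ζ ^ 2 + 1) * h4
  have hsum : ζ + ζ⁻¹ = -2 - sqrtThreeUnit ζ := by
    rw [sqrtThreeUnit]
    ring
  rw [pow_succ, conj, h5, hsum]
  linear_combination -sqrtThreeUnit_sq hζ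

theorem one_sub_inv_pow (hx : x ^ 2 + 4 * x + 1 = 0) (hx1 : x ^ (p ^ k + 1) = 1) :
    (1 - x)⁻¹ ^ (p ^ k + 1) = (6 : F)⁻¹ := by
  have hx0 : x ≠ 0 := by grind
  have conj : (1 - x) ^ p ^ k = 1 - x⁻¹ := by
    rw [← iterateFrobenius_def, map_sub, map_one, iterateFrobenius_def,
      eq_inv_of_mul_eq_one_left ((pow_succ x _).symm.trans hx1)]
  have norm_eq : (1 - x⁻¹) * (1 - x) = 6 := by
    field_simp
    linear_combination -hx
  rw [inv_pow, pow_succ, conj, norm_eq]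

end RootsOfUnity

theorem stmt12_general {p k : ℕ} (hmod : p ^ k % 12 = 5) {F : Type*} [Field F] [ExpChar F p]
    (hζ : ∃ ζ : F, IsPrimitiveRoot ζ 12) :
    ∃ B : Fin 3 → Fin 6 → Fin 6 → F,
      (B 0 = fun i j => if i = j then 1 else 0)
      ∧ (∀ i, IsON (p ^ k) (B i))
      ∧ (∀ i j, i ≠ j → IsMUB (p ^ k) (B i) (B j))
      ∧ ∃ v : Fin 4 → Fin 6 → F,
          (∀ a b : Fin 4, hermInner (p ^ k) (v a) (v b) = if a = b then 1 else 0)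
          ∧ ∀ (a : Fin 4) (i : Fin 3) (j : Fin 6),
              (hermInner (p ^ k) (v a) (B i j)) ^ (p ^ k + 1) = (6 : F)⁻¹ := by
  obtain ⟨ζ, hζ⟩ := hζ
  have hq : Odd (p ^ k) := Nat.odd_iff.mpr (by lia)
  have h12 : ((12 : ℕ) : F) ≠ 0 := (hζ.neZero' (n := 12)).out
  have h6 : ((6 : ℕ) : F) ≠ 0 := fun h => h12 (by push_cast at h ⊢; linear_combination 2 * h)
  have hw : (ζ ^ 4) ^ 2 + ζ ^ 4 + 1 = 0 := by
    linear_combination (ζ ^ 4 + ζ ^ 2 + 1) * pow_four_of_isPrimitiveRoot_twelve hζ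
  have hw1 : (ζ ^ 4) ^ (p ^ k + 1) = 1 := by
    rw [← pow_mul, hζ.pow_eq_one_iff_dvd]
    lia
  have hx := sqrtThreeUnit_sq hζ
  have hx1 := sqrtThreeUnit_pow hζ hmod
  have hx0 : sqrtThreeUnit ζ ≠ 0 := fun h => by simp [h] at hx
  have hc := one_sub_inv_pow hx hx1
  have hH := isUnimodular_basesSix hq hx1
  have hv := isUnimodular_extrasSix hq hx1 hw1
  set x := sqrtThreeUnit ζ
  refine ⟨consStdBasis (1 - x)⁻¹ (basesSix x), rfl,
    isON_consStdBasis hq.pos.ne' (isOrthogonalFamily_basesSix hx) hH hc h6,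
    fun _ _ => isMUB_consStdBasis (pairwise_isUnbiased_basesSix hx) hH hc,
    fun a => (1 - x)⁻¹ • extrasSix x (ζ ^ 4) a,
    (isOrthogonalFamily_extrasSix hx0 hw).hermInner_smul_smul hv hc h6,
    fun a => (hv a).hermInner_smul_consStdBasis_pow (isUnbiased_extrasSix_basesSix hx hw a) hH hc⟩

/-- For every prime power `q ≡ 5 (mod 12)` there exists in `𝔽_{q²}^6` a
set of three pairwise mutually unbiased orthonormal bases `B_0, B_1, B_2`, with `B_0` the
computational basis, together with four pairwise orthogonal unit vectors each of which is
mutually unbiased to every vector of `B_0 ∪ B_1 ∪ B_2`. -/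
theorem stmt12 (q : ℕ) (hq : IsPrimePow q) (hmod : q % 12 = 5)
    (F : Type) [Field F] [Fintype F] (hF : Fintype.card F = q ^ 2) :
    ∃ B : Fin 3 → Fin 6 → Fin 6 → F,
      (B 0 = fun i j => if i = j then 1 else 0)
      ∧ (∀ i, IsON q (B i))
      ∧ (∀ i j, i ≠ j → IsMUB q (B i) (B j))
      ∧ ∃ v : Fin 4 → Fin 6 → F,
          (∀ a b : Fin 4, hermInner q (v a) (v b) = if a = b then 1 else 0)
          ∧ ∀ (a : Fin 4) (i : Fin 3) (j : Fin 6),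
              (hermInner q (v a) (B i j)) ^ (q + 1) = (6 : F)⁻¹ := by
  obtain ⟨p, k, _, rfl⟩ := exists_expChar_eq_pow_of_card_eq_sq hq hF
  exact stmt12_general hmod (exists_isPrimitiveRoot_twelve hmod hF)
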